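/- Let 0 < α < 2, d ≥ 1, and D = {x ∈ ℝ^d : x_d > 0}. For every x ∈ D, ∫_{D^c} |x − y|^{−d−α} dy = (1/α)·[π^{(d−1)/2} Γ((1+α)/2) / Γ((α+d)/2)]·x_d^{−α}, where D^c = ℝ^d \ D. -/

import Mathlib

open MeasureTheory Real Set

/-- The open upper half-space in `ℝ^{d+1}`. -/
def halfSpace (d : ℕ) : Set (EuclideanSpace ℝ (Fin (d + 1))) :=
  {x | 0 < x (Fin.last d)}

lemma kd_gamma {a r : ℝ} (ha : 0 < a) (hr : 0 < r) :
    ∫⁻ t in Ioi (0:ℝ), ENNReal.ofReal (t ^ (a - 1) * exp (-(r * t))) =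
      ENNReal.ofReal (r ^ (-a) * Real.Gamma a) := by
  have h := integral_rpow_mul_exp_neg_mul_Ioi ha hr
  have hpos : 0 < (1 / r) ^ a * Real.Gamma a :=
    mul_pos (by positivity) (Real.Gamma_pos_of_pos ha)
  have hi : Integrable (fun t : ℝ => t ^ (a - 1) * exp (-(r * t)))
      (volume.restrict (Ioi 0)) := by
    by_contra hc
    rw [integral_undef hc] at h
    exact absurd h hpos.ne
  rw [← ofReal_integral_eq_lintegral_ofReal hi, h, one_div, Real.inv_rpow hr.le,
    Real.rpow_neg hr.le]
  filter_upwards [ae_restrict_mem measurableSet_Ioi] with t ht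
  have : (0:ℝ) < t := ht
  simp only [Pi.zero_apply]
  positivity

lemma kd_tail {c α : ℝ} (hc : 0 < c) (hα : 0 < α) :
    ∫⁻ s in Iic (0:ℝ), ENNReal.ofReal ((c - s) ^ (-1 - α)) =
      ENNReal.ofReal (c ^ (-α) / α) := by
  have hm : MeasurePreserving (fun s : ℝ => c - s) volume volume :=
    Measure.measurePreserving_sub_left volume c
  have hpre : Iic (0:ℝ) = (fun s : ℝ => c - s) ⁻¹' (Ici c) := by
    ext s; simp
  rw [hpre, hm.setLIntegral_comp_preimage measurableSet_Ici
    (f := fun u => ENNReal.ofReal (u ^ (-1 - α))) (by fun_prop),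
    setLIntegral_congr Ioi_ae_eq_Ici.symm,
    ← ofReal_integral_eq_lintegral_ofReal (integrableOn_Ioi_rpow_of_lt (by linarith) hc),
    integral_Ioi_rpow_of_lt (by linarith) hc]
  · congr 1
    have : -1 - α + 1 = -α := by ring
    rw [this, neg_div_neg_eq]
  · filter_upwards [ae_restrict_mem measurableSet_Ioi] with t ht
    have : (0:ℝ) < t := hc.trans ht
    simp only [Pi.zero_apply]
    positivity

lemma kd_meas (d : ℕ) : MeasurableSet (halfSpace d) := by
  unfold halfSpace
  exact measurableSet_lt measurable_const (by fun_prop)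

/-- one-dimensional factors -/
noncomputable def kdF (d : ℕ) (x : EuclideanSpace ℝ (Fin (d + 1))) (t : ℝ) (i : Fin (d + 1))
    (s : ℝ) : ℝ :=
  (if i = Fin.last d then Iic (0:ℝ) else univ).indicator (fun s => exp (-((x i - s) ^ 2 * t))) s

lemma kd_gauss_int {t : ℝ} (ht : 0 < t) (c : ℝ) :
    Integrable (fun s : ℝ => exp (-((c - s) ^ 2 * t))) := by
  have := (integrable_exp_neg_mul_sq ht).comp_sub_left c
  refine this.congr (ae_of_all _ fun s => ?_)
  simp only []
  congr 1; ring

lemma kd_gauss_val {t : ℝ} (c : ℝ) :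
    ∫ s : ℝ, exp (-((c - s) ^ 2 * t)) = √(π / t) := by
  rw [← integral_gaussian, ← integral_sub_left_eq_self (fun s => exp (-t * s ^ 2)) volume c]
  congr 1; ext s; congr 1; ring

lemma kd_gauss (d : ℕ) (x : EuclideanSpace ℝ (Fin (d + 1))) {t : ℝ} (ht : 0 < t) :
    ∫⁻ y in (halfSpace d)ᶜ, ENNReal.ofReal (exp (-(‖x - y‖ ^ 2 * t))) =
      ENNReal.ofReal ((π / t) ^ ((d:ℝ) / 2)) *
        ∫⁻ s in Iic (0:ℝ), ENNReal.ofReal (exp (-((x (Fin.last d) - s) ^ 2 * t))) := by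
  have hint : ∀ i, Integrable (kdF d x t i) := by
    intro i
    refine (kd_gauss_int ht (x i)).indicator ?_
    split_ifs
    · exact measurableSet_Iic
    · exact MeasurableSet.univ
  have hnn : ∀ i s, 0 ≤ kdF d x t i s := fun i s =>
    indicator_nonneg (fun s _ => (exp_pos _).le) s
  rw [← lintegral_indicator (kd_meas d).compl]
  have hpt : ∀ y : Fin (d + 1) → ℝ,
      (halfSpace d)ᶜ.indicator (fun y => ENNReal.ofReal (exp (-(‖x - y‖ ^ 2 * t))))
        (WithLp.toLp 2 y) = ENNReal.ofReal (∏ i, kdF d x t i (y i)) := by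
    intro y
    by_cases hy : y (Fin.last d) ≤ 0
    · rw [indicator_of_mem (by simpa [halfSpace] using hy)]
      congr 1
      have : ∀ i, kdF d x t i (y i) = exp (-((x i - y i) ^ 2 * t)) := by
        intro i
        unfold kdF
        rw [indicator_of_mem]
        split_ifs with h
        · subst h; exact hy
        · trivial
      simp_rw [this]
      rw [← Real.exp_sum, EuclideanSpace.norm_sq_eq, Finset.sum_neg_distrib, Finset.sum_mul]
      simp
    · rw [indicator_of_notMem (by simpa [halfSpace] using hy)]
      rw [Finset.prod_eq_zero (Finset.mem_univ (Fin.last d)), ENNReal.ofReal_zero]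
      unfold kdF
      rw [indicator_of_notMem]
      simpa using hy
  rw [← (PiLp.volume_preserving_toLp (Fin (d + 1))).lintegral_comp_emb
    (MeasurableEquiv.toLp 2 _).measurableEmbedding]
  simp_rw [hpt]
  have hI : Integrable (fun y : Fin (d + 1) → ℝ => ∏ i, kdF d x t i (y i)) volume :=
    Integrable.fintype_prod hint
  rw [← ofReal_integral_eq_lintegral_ofReal hI
    (ae_of_all _ fun y => Finset.prod_nonneg fun i _ => hnn i _),
    integral_fintype_prod_volume_eq_prod, Fin.prod_univ_castSucc]
  have h1 : ∀ i : Fin d, ∫ s, kdF d x t i.castSucc s = √(π / t) := by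
    intro i
    rw [← kd_gauss_val (x i.castSucc)]
    congr 1; ext s
    simp [kdF, (Fin.castSucc_lt_last i).ne]
  have h2 : ∫ s, kdF d x t (Fin.last d) s =
      ∫ s in Iic (0:ℝ), exp (-((x (Fin.last d) - s) ^ 2 * t)) := by
    rw [← integral_indicator measurableSet_Iic]
    congr 1; ext s
    simp [kdF]
  simp_rw [h1]
  rw [h2, ENNReal.ofReal_mul (by positivity),
    ofReal_integral_eq_lintegral_ofReal (kd_gauss_int ht _).integrableOn
      (ae_of_all _ fun s => (exp_pos _).le)]
  congr 2
  rw [Finset.prod_const, Finset.card_univ, Fintype.card_fin, Real.sqrt_eq_rpow,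
    ← Real.rpow_natCast, ← Real.rpow_mul (by positivity)]
  congr 1; ring

lemma kd_main (d : ℕ) (α : ℝ) (hα0 : 0 < α)
    (x : EuclideanSpace ℝ (Fin (d + 1))) (hx : x ∈ halfSpace d) :
    ENNReal.ofReal (Real.Gamma ((α + ((d : ℝ) + 1)) / 2)) *
      (∫⁻ y in (halfSpace d)ᶜ, ENNReal.ofReal (‖x - y‖ ^ (-((d : ℝ) + 1) - α))) =
      ENNReal.ofReal (π ^ ((d:ℝ) / 2) * Real.Gamma ((1 + α) / 2)) *
        ENNReal.ofReal (x (Fin.last d) ^ (-α) / α) := by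
  have hx0 : 0 < x (Fin.last d) := hx
  set p := (α + ((d : ℝ) + 1)) / 2 with hp
  have hp0 : 0 < p := by positivity
  have hq0 : 0 < (1 + α) / 2 := by positivity
  rw [← lintegral_const_mul' _ _ ENNReal.ofReal_ne_top]
  have e1 : ∫⁻ y in (halfSpace d)ᶜ, ENNReal.ofReal (Real.Gamma p) *
        ENNReal.ofReal (‖x - y‖ ^ (-((d : ℝ) + 1) - α)) =
      ∫⁻ y in (halfSpace d)ᶜ, ∫⁻ t in Ioi (0:ℝ),
        ENNReal.ofReal (t ^ (p - 1) * exp (-(‖x - y‖ ^ 2 * t))) := by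
    refine setLIntegral_congr_fun (kd_meas d).compl fun y hy => ?_
    have hne : 0 < ‖x - y‖ := by
      rw [norm_pos_iff, sub_ne_zero]
      rintro rfl
      exact hy hx
    rw [kd_gamma hp0 (by positivity), ← ENNReal.ofReal_mul (Real.Gamma_pos_of_pos hp0).le,
      mul_comm, ← Real.rpow_natCast, ← Real.rpow_mul hne.le]
    congr 3
    push_cast
    rw [hp]; ring
  have e2 : ∀ t ∈ Ioi (0:ℝ), ∫⁻ y in (halfSpace d)ᶜ,
        ENNReal.ofReal (t ^ (p - 1) * exp (-(‖x - y‖ ^ 2 * t))) =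
      ∫⁻ s in Iic (0:ℝ), ENNReal.ofReal (π ^ ((d:ℝ) / 2)) * ENNReal.ofReal
        (t ^ ((1 + α) / 2 - 1) * exp (-((x (Fin.last d) - s) ^ 2 * t))) := by
    intro t ht
    have ht0 : 0 < t := ht
    simp_rw [ENNReal.ofReal_mul (show 0 ≤ t ^ (p - 1) by positivity),
      ENNReal.ofReal_mul (show 0 ≤ t ^ ((1 + α) / 2 - 1) by positivity), ← mul_assoc]
    rw [lintegral_const_mul' _ _ ENNReal.ofReal_ne_top, kd_gauss d x ht0,
      lintegral_const_mul' _ _ (by finiteness), ← mul_assoc]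
    congr 1
    rw [← ENNReal.ofReal_mul (by positivity), ← ENNReal.ofReal_mul (by positivity)]
    congr 1
    rw [Real.div_rpow pi_pos.le ht0.le, mul_div_assoc', mul_comm, mul_div_assoc,
      ← Real.rpow_sub ht0]
    congr 2
    rw [hp]; ring
  rw [e1, lintegral_lintegral_swap (by fun_prop), setLIntegral_congr_fun measurableSet_Ioi e2,
    lintegral_lintegral_swap (by fun_prop), ← kd_tail hx0 hα0,
    ← lintegral_const_mul' _ _ ENNReal.ofReal_ne_top]
  refine setLIntegral_congr_fun measurableSet_Iic fun s hs => ?_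
  have hs0 : s ≤ 0 := hs
  have hc : 0 < x (Fin.last d) - s := by linarith
  simp only []
  rw [lintegral_const_mul' _ _ ENNReal.ofReal_ne_top, kd_gamma hq0 (by positivity),
    ← ENNReal.ofReal_mul (by positivity),
    ← ENNReal.ofReal_mul (mul_nonneg (by positivity) (Real.Gamma_pos_of_pos hq0).le),
    ← Real.rpow_natCast, ← Real.rpow_mul hc.le, mul_comm (_ ^ _) (Real.Gamma _), mul_assoc]
  congr 4
  push_cast
  ring

theorem killing_density_halfspace (d : ℕ) (α : ℝ) (hα0 : 0 < α) (hα2 : α < 2)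
    (x : EuclideanSpace ℝ (Fin (d + 1))) (hx : x ∈ halfSpace d) :
    (∫ y in (halfSpace d)ᶜ, ‖x - y‖ ^ (-((d : ℝ) + 1) - α)) =
      (1 / α) * (Real.pi ^ ((((d : ℝ) + 1) - 1) / 2) * Real.Gamma ((1 + α) / 2) /
          Real.Gamma ((α + ((d : ℝ) + 1)) / 2)) *
        x (Fin.last d) ^ (-α) := by
  have h := kd_main d α hα0 x hx
  have hx0 : 0 < x (Fin.last d) := hx
  have hp0 : 0 < Real.Gamma ((α + ((d : ℝ) + 1)) / 2) := Real.Gamma_pos_of_pos (by positivity)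
  have hq0 : 0 < Real.Gamma ((1 + α) / 2) := Real.Gamma_pos_of_pos (by positivity)
  have h' := congrArg ENNReal.toReal h
  rw [ENNReal.toReal_mul, ENNReal.toReal_mul, ENNReal.toReal_ofReal hp0.le,
    ENNReal.toReal_ofReal (by positivity), ENNReal.toReal_ofReal (by positivity)] at h'
  rw [integral_eq_lintegral_of_nonneg_ae (ae_of_all _ fun y => by
    simp only [Pi.zero_apply]; positivity) (by
      apply Measurable.aestronglyMeasurable; fun_prop)]
  have e : (((d : ℝ) + 1) - 1) / 2 = (d : ℝ) / 2 := by ring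
  rw [e]
  field_simp
  field_simp at h'
  linarith
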